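/- Fix integers n ≥ 1 and k with 1 ≤ k ≤ n, let x̃ ∈ ℝⁿ be k-sparse nonnegative with x̃_j > 0 for some j, let σ > 0, C_w > 0, g ∈ ℝᵐ and h ∈ ℝⁿ. Define the signed feasible set S_w⁺(σ, x̃, C_w) = {w ∈ ℝⁿ : ‖w‖₂ ≤ C_w, Σ_{i=1}^{n} w_i ≤ 0, and x̃_i + w_i ≥ 0 for all i} and ξ₊(σ, g, h, x̃) = min_{w ∈ S_w⁺(σ, x̃, C_w)} ( √(‖w‖₂² + σ²)·‖g‖₂ + ⟨h, w⟩ ). Then strong Lagrange duality holds: ξ₊(σ, g, h, x̃) = sup { σ·√((‖g‖₂ + γ)² − ‖h + ν·1 − λ‖₂²) − Σ_{i=n−k+1}^{n} λ_i·x̃_i − γ·√(C_w² + σ²) : ν ≥ 0, λ ∈ ℝⁿ with λ_i ≥ 0 for all i, γ ≥ 0, and ‖g‖₂ + γ ≥ ‖h + ν·1 − λ‖₂ }. -/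

import Mathlib

noncomputable def e2norm {d : ℕ} (x : Fin d → ℝ) : ℝ := Real.sqrt (∑ i, x i ^ 2)

noncomputable def l1norm {d : ℕ} (x : Fin d → ℝ) : ℝ := ∑ i, |x i|

def kSparseNonneg (n k : ℕ) (x : Fin n → ℝ) : Prop :=
  (∀ i : Fin n, (i : ℕ) < n - k → x i = 0) ∧ ∀ i, 0 ≤ x i

noncomputable def tailSum {n : ℕ} (k : ℕ) (lam x : Fin n → ℝ) : ℝ :=
  ∑ i ∈ Finset.univ.filter (fun i : Fin n => n - k ≤ (i : ℕ)), lam i * x i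


open Filter Topology in
theorem aux_lagrange {V ι : Type*} [AddCommGroup V] [Module ℝ V] [Fintype ι]
    (f : V → ℝ) (φ : ι → V → ℝ) (hf : ConvexOn ℝ Set.univ f)
    (hφ : ∀ i, ConvexOn ℝ Set.univ (φ i)) (w0 : V) (hw0 : ∀ i, φ i w0 < 0)
    (p : ℝ) (hp : ∀ w, (∀ i, φ i w ≤ 0) → p ≤ f w) :
    ∃ μ : ι → ℝ, (∀ i, 0 ≤ μ i) ∧ ∀ w, p ≤ f w + ∑ i, μ i * φ i w := by
  classical
  let A : Set ((ι → ℝ) × ℝ) := {q | ∃ w, (∀ i, φ i w < q.1 i) ∧ f w < q.2}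
  have key : ∀ {a b x y x' y' : ℝ}, 0 ≤ a → 0 ≤ b → a + b = 1 → x < x' → y < y' →
      a * x + b * y < a * x' + b * y' := by
    intro a b x y x' y' ha hb hab hx hy
    rcases eq_or_lt_of_le ha with h0 | h0
    · subst h0
      have : b = 1 := by linarith
      subst this; linarith
    · have h1 := mul_lt_mul_of_pos_left hx h0
      have h2 := mul_le_mul_of_nonneg_left hy.le hb
      linarith
  have hconv : Convex ℝ A := by
    rintro q ⟨w, hw1, hw2⟩ q' ⟨w', hw1', hw2'⟩ a b ha hb hab
    refine ⟨a • w + b • w', fun i => ?_, ?_⟩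
    · have h1 := (hφ i).2 (Set.mem_univ w) (Set.mem_univ w') ha hb hab
      have h2 := key ha hb hab (hw1 i) (hw1' i)
      simp only [smul_eq_mul] at h1
      simpa using h1.trans_lt h2
    · have h1 := hf.2 (Set.mem_univ w) (Set.mem_univ w') ha hb hab
      have h2 := key ha hb hab hw2 hw2'
      simp only [smul_eq_mul] at h1
      simpa using h1.trans_lt h2
  have hopen : IsOpen A := by
    have : A = ⋃ w, ((⋂ i, {q : (ι → ℝ) × ℝ | φ i w < q.1 i}) ∩ {q | f w < q.2}) := by
      ext q; simp [A]
    rw [this]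
    refine isOpen_iUnion fun w => IsOpen.inter (isOpen_iInter_of_finite fun i => ?_) ?_
    · exact isOpen_lt continuous_const (by fun_prop)
    · exact isOpen_lt continuous_const (by fun_prop)
  have hnot : ((0 : ι → ℝ), p) ∉ A := by
    rintro ⟨w, h1, h2⟩
    exact absurd (hp w fun i => (h1 i).le) (not_le.mpr h2)
  obtain ⟨F, hF⟩ := geometric_hahn_banach_open_point hconv hopen hnot
  set m : ι → ℝ := fun i => - F (Pi.single i 1, 0) with hm
  set r : ℝ := - F (0, 1) with hr
  have hFe : ∀ (q : ι → ℝ) (s : ℝ), F (q, s) = -(∑ i, m i * q i + r * s) := by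
    intro q s
    have h1 : (q, s) = ∑ i, q i • ((Pi.single i 1 : ι → ℝ), (0:ℝ)) + s • ((0 : ι → ℝ), (1:ℝ)) := by
      refine Prod.ext ?_ ?_
      · ext j
        simp [Prod.fst_sum, Finset.sum_apply, Pi.single_apply]
      · simp [Prod.snd_sum]
    rw [h1, map_add, map_sum, map_smul]
    simp only [map_smul, smul_eq_mul, hm, hr, neg_mul, Finset.sum_neg_distrib]
    simp only [mul_comm]
    ring
  have hA : ∀ w (q : ι → ℝ) (s : ℝ), (∀ i, φ i w < q i) → f w < s →
      r * p < ∑ i, m i * q i + r * s := by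
    intro w q s h1 h2
    have := hF (q, s) ⟨w, h1, h2⟩
    rw [hFe, hFe] at this
    simp at this
    linarith
  have hr0 : 0 < r := by
    have := hA w0 0 (max (f w0 + 1) (p + 1)) (fun i => by simpa using hw0 i)
      (lt_of_lt_of_le (by linarith) (le_max_left _ _))
    simp at this
    have h2 : p < max (f w0 + 1) (p + 1) := lt_of_lt_of_le (by linarith) (le_max_right _ _)
    by_contra hcon
    have := mul_le_mul_of_nonpos_left h2.le (not_lt.mp hcon)
    linarith
  have hm0 : ∀ i, 0 ≤ m i := by
    intro i
    by_contra hcon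
    push Not at hcon
    have h1 : ∀ t : ℝ, 0 ≤ t → r * p < m i * t + r * (f w0 + 1) := by
      intro t ht
      have := hA w0 (Pi.single i t) (f w0 + 1) (fun j => by
        refine (hw0 j).trans_le ?_
        by_cases hj : j = i
        · subst hj; simpa using ht
        · simp [hj]) (by linarith)
      simpa [Pi.single_apply] using this
    have h2 := h1 (|r * p - r * (f w0 + 1)| / (- m i)) (by
      apply div_nonneg (abs_nonneg _); linarith)
    have h3 : m i * (|r * p - r * (f w0 + 1)| / (- m i)) = -|r * p - r * (f w0 + 1)| := by
      rw [div_neg, mul_neg, mul_div_cancel₀ _ hcon.ne]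
    rw [h3] at h2
    have := neg_abs_le (r * p - r * (f w0 + 1))
    linarith
  have hlim : ∀ w, r * p ≤ ∑ i, m i * φ i w + r * f w := by
    intro w
    have h1 : ∀ e : ℝ, 0 < e → r * p ≤ (∑ i, m i * φ i w + r * f w) + e * (∑ i, m i + r) := by
      intro e he
      have := hA w (fun i => φ i w + e) (f w + e) (fun i => by linarith) (by linarith)
      have h2 : ∑ i, m i * (φ i w + e) = ∑ i, m i * φ i w + e * ∑ i, m i := by
        rw [Finset.mul_sum, ← Finset.sum_add_distrib]
        exact Finset.sum_congr rfl fun i _ => by ring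
      rw [h2] at this
      linarith
    have hM : 0 < ∑ i, m i + r := add_pos_of_nonneg_of_pos (Finset.sum_nonneg fun i _ => hm0 i) hr0
    refine le_of_forall_pos_le_add fun e he => ?_
    have := h1 (e / (∑ i, m i + r)) (by positivity)
    rwa [div_mul_cancel₀ _ hM.ne'] at this
  refine ⟨fun i => m i / r, fun i => div_nonneg (hm0 i) hr0.le, fun w => ?_⟩
  have h1 : ∑ i, m i / r * φ i w = (∑ i, m i * φ i w) / r := by
    rw [Finset.sum_div]
    exact Finset.sum_congr rfl fun i _ => by ring
  rw [h1]
  have := hlim w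
  have h2 : f w + (∑ i, m i * φ i w) / r = (∑ i, m i * φ i w + r * f w) / r := by
    field_simp; ring
  rw [h2, le_div_iff₀ hr0]
  linarith

theorem aux_e2sq {d : ℕ} (x : Fin d → ℝ) : e2norm x ^ 2 = ∑ i, x i ^ 2 :=
  Real.sq_sqrt (Finset.sum_nonneg fun i _ => sq_nonneg _)

theorem aux_e2nonneg {d : ℕ} (x : Fin d → ℝ) : 0 ≤ e2norm x := Real.sqrt_nonneg _

theorem aux_cs {d : ℕ} (x y : Fin d → ℝ) : ∑ i, x i * y i ≤ e2norm x * e2norm y :=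
  Real.sum_mul_le_sqrt_mul_sqrt _ _ _

/-- two dimensional Cauchy-Schwarz -/
theorem aux_cs2 (a b c d : ℝ) : a * c + b * d ≤ Real.sqrt (a ^ 2 + b ^ 2) * Real.sqrt (c ^ 2 + d ^ 2) := by
  rw [← Real.sqrt_mul (by positivity)]
  apply Real.le_sqrt_of_sq_le
  nlinarith [sq_nonneg (a * d - b * c)]

theorem aux_conv {d : ℕ} (σ : ℝ) :
    ConvexOn ℝ Set.univ (fun w : Fin d → ℝ => Real.sqrt (e2norm w ^ 2 + σ ^ 2)) := by
  refine ⟨convex_univ, fun x _ y _ a b ha hb hab => ?_⟩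
  simp only [smul_eq_mul]
  apply Real.sqrt_le_iff.mpr
  refine ⟨by positivity, ?_⟩
  have h1 := aux_cs x y
  have h2 := aux_cs2 (e2norm x) σ (e2norm y) σ
  have hx := Real.sq_sqrt (show 0 ≤ e2norm x ^ 2 + σ ^ 2 by positivity)
  have hy := Real.sq_sqrt (show 0 ≤ e2norm y ^ 2 + σ ^ 2 by positivity)
  have h3 : e2norm (a • x + b • y) ^ 2
      = a ^ 2 * e2norm x ^ 2 + b ^ 2 * e2norm y ^ 2 + 2 * (a * b) * ∑ i, x i * y i := by
    simp only [aux_e2sq, Finset.mul_sum, ← Finset.sum_add_distrib]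
    refine Finset.sum_congr rfl fun i _ => ?_
    simp; ring
  have h4 : σ ^ 2 = a ^ 2 * σ ^ 2 + b ^ 2 * σ ^ 2 + 2 * (a * b) * σ ^ 2 := by
    have : σ ^ 2 = (a + b) ^ 2 * σ ^ 2 := by rw [hab]; ring
    linarith
  have h5 : 2 * (a * b) * (∑ i, x i * y i + σ ^ 2) ≤ 2 * (a * b) *
      (Real.sqrt (e2norm x ^ 2 + σ ^ 2) * Real.sqrt (e2norm y ^ 2 + σ ^ 2)) := by
    apply mul_le_mul_of_nonneg_left _ (by positivity)
    nlinarith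
  have h6 : (a * Real.sqrt (e2norm x ^ 2 + σ ^ 2) + b * Real.sqrt (e2norm y ^ 2 + σ ^ 2)) ^ 2
      = a ^ 2 * (e2norm x ^ 2 + σ ^ 2) + b ^ 2 * (e2norm y ^ 2 + σ ^ 2) + 2 * (a * b) *
      (Real.sqrt (e2norm x ^ 2 + σ ^ 2) * Real.sqrt (e2norm y ^ 2 + σ ^ 2)) := by
    rw [← hx, ← hy]
    simp only [Real.sqrt_sq (Real.sqrt_nonneg _)]
    ring
  rw [h6, h3]
  linarith

theorem aux_weak1 (G N W σ : ℝ) (hN : 0 ≤ N) (hNG : N ≤ G) :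
    σ * Real.sqrt (G ^ 2 - N ^ 2) ≤ Real.sqrt (W ^ 2 + σ ^ 2) * G - N * W := by
  have h0 : 0 ≤ G ^ 2 - N ^ 2 := by nlinarith
  have h := aux_cs2 W σ N (Real.sqrt (G ^ 2 - N ^ 2))
  rw [Real.sq_sqrt h0, show N ^ 2 + (G ^ 2 - N ^ 2) = G ^ 2 by ring,
    Real.sqrt_sq (hN.trans hNG)] at h
  linarith

theorem aux_strong1 (G N K σ : ℝ) (hN : 0 ≤ N) (hG : 0 ≤ G) (hσ : 0 < σ)
    (H : ∀ t : ℝ, 0 ≤ t → K ≤ Real.sqrt ((t * N) ^ 2 + σ ^ 2) * G - t * N ^ 2) :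
    N ≤ G ∧ K ≤ σ * Real.sqrt (G ^ 2 - N ^ 2) := by
  have hNG : N ≤ G := by
    by_contra hcon
    push Not at hcon
    have hN0 : 0 < N := hG.trans_lt hcon
    have hp : 0 < N * (N - G) := mul_pos hN0 (by linarith)
    have ht : 0 ≤ (|G * σ - K| + 1) / (N * (N - G)) := by positivity
    set t := (|G * σ - K| + 1) / (N * (N - G)) with htd
    have h1 := H t ht
    have h2 : Real.sqrt ((t * N) ^ 2 + σ ^ 2) ≤ t * N + σ := by
      apply Real.sqrt_le_iff.mpr
      have : 0 ≤ t * N := by positivity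
      constructor
      · positivity
      · nlinarith
    have h3 := mul_le_mul_of_nonneg_right h2 hG
    have h4 : t * (N * (N - G)) = |G * σ - K| + 1 := div_mul_cancel₀ _ hp.ne'
    have := le_abs_self (G * σ - K)
    nlinarith
  refine ⟨hNG, ?_⟩
  rcases eq_or_lt_of_le hNG with h0 | h0
  · subst h0
    simp only [sub_self, Real.sqrt_zero, mul_zero]
    refine le_of_forall_pos_le_add fun e he => ?_
    have ht : 0 < σ ^ 2 / e := by positivity
    set t := σ ^ 2 / e with htd
    have hte : t * e = σ ^ 2 := div_mul_cancel₀ _ he.ne'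
    rcases eq_or_lt_of_le hN with h1 | h1
    · have := H 0 le_rfl
      rw [← h1] at this
      simp at this
      linarith
    · have h2 := H t ht.le
      have h3 : Real.sqrt ((t * N) ^ 2 + σ ^ 2) ≤ t * N + e / N := by
        apply Real.sqrt_le_iff.mpr
        refine ⟨by positivity, ?_⟩
        have : (t * N + e / N) ^ 2 = (t * N) ^ 2 + 2 * (t * e) + (e / N) ^ 2 := by
          field_simp
          ring
        rw [this, hte]
        nlinarith [sq_nonneg (e / N), sq_nonneg σ]
      have h4 := mul_le_mul_of_nonneg_right h3 hN
      have h5 : (t * N + e / N) * N = t * N ^ 2 + e := by field_simp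
      linarith
  · have hp : 0 < G ^ 2 - N ^ 2 := by nlinarith
    set D := Real.sqrt (G ^ 2 - N ^ 2) with hD
    have hD0 : 0 < D := Real.sqrt_pos.mpr hp
    have hD2 : D ^ 2 = G ^ 2 - N ^ 2 := Real.sq_sqrt hp.le
    have h1 := H (σ / D) (by positivity)
    have h2 : (σ / D * N) ^ 2 + σ ^ 2 = (σ * G / D) ^ 2 := by
      field_simp
      linarith
    rw [h2, Real.sqrt_sq (by positivity)] at h1
    have h3 : σ * G / D * G - σ / D * N ^ 2 = σ * D := by
      field_simp
      linarith
    linarith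

theorem aux_tail {n k : ℕ} (lam xt : Fin n → ℝ) (hxt : kSparseNonneg n k xt) :
    tailSum k lam xt = ∑ i, lam i * xt i := by
  unfold tailSum
  rw [Finset.sum_filter]
  refine Finset.sum_congr rfl fun i _ => ?_
  split_ifs with hi
  · rfl
  · rw [hxt.1 i (by omega)]; simp

open Filter Topology in
theorem aux_slater {n : ℕ} (xt : Fin n → ℝ) (hx : ∀ i, 0 ≤ xt i) (hxtpos : ∃ j, 0 < xt j)
    (Cw : ℝ) (hCw : 0 < Cw) :
    ∃ w : Fin n → ℝ, e2norm w ^ 2 < Cw ^ 2 ∧ ∑ i, w i < 0 ∧ ∀ i, 0 < xt i + w i := by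
  obtain ⟨j, hj⟩ := hxtpos
  let d : Fin n → ℝ := fun i => if i = j then -(n : ℝ) else 1
  have h1 : ∀ᶠ t : ℝ in 𝓝[>] 0, t ^ 2 * (∑ i, d i ^ 2) < Cw ^ 2 := by
    apply nhdsWithin_le_nhds
    apply ContinuousAt.eventually_lt (by fun_prop) (by fun_prop)
    simp; positivity
  have h2 : ∀ᶠ t : ℝ in 𝓝[>] 0, t * n < xt j := by
    apply nhdsWithin_le_nhds
    apply ContinuousAt.eventually_lt (by fun_prop) (by fun_prop)
    simpa using hj
  have h3 : ∀ᶠ t : ℝ in 𝓝[>] 0, 0 < t := self_mem_nhdsWithin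
  obtain ⟨t, h1, h2, h3⟩ := (h1.and (h2.and h3)).exists
  refine ⟨fun i => t * d i, ?_, ?_, ?_⟩
  · rw [aux_e2sq]
    simpa [mul_pow, ← Finset.mul_sum] using h1
  · rw [← Finset.mul_sum]
    have : ∑ i, d i = -1 := by
      have : ∀ i, d i = 1 - (if i = j then (n : ℝ) + 1 else 0) := by
        intro i; simp only [d]; split_ifs <;> ring
      simp [this]
    rw [this]; linarith
  · intro i
    by_cases hi : i = j
    · subst hi; simp [d]; linarith
    · simp [d, hi]; linarith [hx i]

theorem aux_weak {n : ℕ} (xt : Fin n → ℝ) (σ Cw a : ℝ) (h : Fin n → ℝ)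
    (w : Fin n → ℝ) (hw1 : e2norm w ≤ Cw) (hw2 : ∑ i, w i ≤ 0) (hw3 : ∀ i, 0 ≤ xt i + w i)
    (ν : ℝ) (lam : Fin n → ℝ) (γ : ℝ) (hν : 0 ≤ ν) (hlam : ∀ i, 0 ≤ lam i) (hγ : 0 ≤ γ)
    (hc : e2norm (fun i => h i + ν - lam i) ≤ a + γ) :
    σ * Real.sqrt ((a + γ) ^ 2 - e2norm (fun i => h i + ν - lam i) ^ 2)
      - ∑ i, lam i * xt i - γ * Real.sqrt (Cw ^ 2 + σ ^ 2)
    ≤ Real.sqrt (e2norm w ^ 2 + σ ^ 2) * a + ∑ i, h i * w i := by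
  have h1 := aux_weak1 (a + γ) _ (e2norm w) σ (aux_e2nonneg _) hc
  have h2 := aux_cs (fun i => h i + ν - lam i) (fun i => - w i)
  have h3 : e2norm (fun i => - w i) = e2norm w := by simp [e2norm]
  rw [h3] at h2
  have h4 : ∑ i, (h i + ν - lam i) * (- w i) =
      -(∑ i, h i * w i) - ν * ∑ i, w i + ∑ i, lam i * (xt i + w i) - ∑ i, lam i * xt i := by
    rw [Finset.mul_sum, ← Finset.sum_neg_distrib, ← Finset.sum_sub_distrib,
      ← Finset.sum_add_distrib, ← Finset.sum_sub_distrib]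
    exact Finset.sum_congr rfl fun i _ => by ring
  rw [h4] at h2
  have h5 : 0 ≤ ∑ i, lam i * (xt i + w i) :=
    Finset.sum_nonneg fun i _ => mul_nonneg (hlam i) (hw3 i)
  have h6 : ν * ∑ i, w i ≤ 0 := mul_nonpos_of_nonneg_of_nonpos hν hw2
  have h7 : Real.sqrt (e2norm w ^ 2 + σ ^ 2) ≤ Real.sqrt (Cw ^ 2 + σ ^ 2) := by
    apply Real.sqrt_le_sqrt
    have := aux_e2nonneg w
    gcongr
  have h8 := mul_le_mul_of_nonneg_left h7 hγ
  linarith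

theorem aux_strong {n : ℕ} (xt : Fin n → ℝ) (hx : ∀ i, 0 ≤ xt i) (hxtpos : ∃ j, 0 < xt j)
    (σ Cw a : ℝ) (hσ : 0 < σ) (hCw : 0 < Cw) (ha : 0 ≤ a) (h : Fin n → ℝ) (p : ℝ)
    (hp : ∀ w : Fin n → ℝ, e2norm w ≤ Cw → ∑ i, w i ≤ 0 → (∀ i, 0 ≤ xt i + w i) →
      p ≤ Real.sqrt (e2norm w ^ 2 + σ ^ 2) * a + ∑ i, h i * w i) :
    ∃ ν : ℝ, ∃ lam : Fin n → ℝ, ∃ γ : ℝ, 0 ≤ ν ∧ (∀ i, 0 ≤ lam i) ∧ 0 ≤ γ ∧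
      e2norm (fun i => h i + ν - lam i) ≤ a + γ ∧
      p ≤ σ * Real.sqrt ((a + γ) ^ 2 - e2norm (fun i => h i + ν - lam i) ^ 2)
        - ∑ i, lam i * xt i - γ * Real.sqrt (Cw ^ 2 + σ ^ 2) := by
  obtain ⟨w0, hw1, hw2, hw3⟩ := aux_slater xt hx hxtpos Cw hCw
  have hlin : ∀ (c : Fin n → ℝ), ConvexOn ℝ Set.univ (fun w : Fin n → ℝ => ∑ i, c i * w i) := by
    intro c
    refine ⟨convex_univ, fun x _ y _ s t _ _ _ => le_of_eq ?_⟩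
    simp only [smul_eq_mul, Finset.mul_sum, ← Finset.sum_add_distrib]
    refine Finset.sum_congr rfl fun i _ => ?_
    simp; ring
  let φ : Option (Option (Fin n)) → (Fin n → ℝ) → ℝ := fun o w =>
    match o with
    | none => Real.sqrt (e2norm w ^ 2 + σ ^ 2) - Real.sqrt (Cw ^ 2 + σ ^ 2)
    | some none => ∑ i, w i
    | some (some i) => - xt i - w i
  obtain ⟨μ, hμ, H⟩ := aux_lagrange
    (fun w : Fin n → ℝ => Real.sqrt (e2norm w ^ 2 + σ ^ 2) * a + ∑ i, h i * w i) φ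
    (by
      refine ConvexOn.add ?_ (hlin h)
      have := (aux_conv (d := n) σ).smul ha
      simpa [mul_comm] using this)
    (by
      rintro (_ | _ | i)
      · exact (aux_conv (d := n) σ).sub (concaveOn_const _ convex_univ)
      · simpa using hlin (fun _ => 1)
      · refine ⟨convex_univ, fun x _ y _ s t _ _ hst => le_of_eq ?_⟩
        have : t = 1 - s := by linarith
        subst this
        simp [φ]; ring)
    w0
    (by
      rintro (_ | _ | i)
      · have : Real.sqrt (e2norm w0 ^ 2 + σ ^ 2) < Real.sqrt (Cw ^ 2 + σ ^ 2) :=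
          Real.sqrt_lt_sqrt (by positivity) (by linarith)
        simp only [φ]; linarith
      · exact hw2
      · have := hw3 i
        simp only [φ]; linarith)
    p
    (by
      intro w hw
      refine hp w ?_ (hw (some none)) (fun i => ?_)
      · have h1 := hw none
        simp only [φ] at h1
        have h2 : e2norm w ^ 2 + σ ^ 2 ≤ Cw ^ 2 + σ ^ 2 :=
          (Real.sqrt_le_sqrt_iff (by positivity)).mp (by linarith)
        exact (sq_le_sq₀ (aux_e2nonneg w) hCw.le).mp (by linarith)
      · have := hw (some (some i))
        simp only [φ] at this
        linarith)
  set γ := μ none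
  set ν := μ (some none)
  set lam : Fin n → ℝ := fun i => μ (some (some i)) with hlam
  have hγ : 0 ≤ γ := hμ _
  have H' : ∀ w : Fin n → ℝ, p + ∑ i, lam i * xt i + γ * Real.sqrt (Cw ^ 2 + σ ^ 2) ≤
      Real.sqrt (e2norm w ^ 2 + σ ^ 2) * (a + γ) + ∑ i, (h i + ν - lam i) * w i := by
    intro w
    have h1 := H w
    simp only [Fintype.sum_option, φ] at h1
    have h2 : ∑ i, (h i + ν - lam i) * w i =
      ∑ i, h i * w i + ν * ∑ i, w i + ∑ i, lam i * (- xt i - w i) + ∑ i, lam i * xt i := by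
      rw [Finset.mul_sum, ← Finset.sum_add_distrib, ← Finset.sum_add_distrib,
        ← Finset.sum_add_distrib]
      exact Finset.sum_congr rfl fun i _ => by ring
    rw [h2]
    linarith
  have h9 := aux_strong1 (a + γ) (e2norm (fun i => h i + ν - lam i))
    (p + ∑ i, lam i * xt i + γ * Real.sqrt (Cw ^ 2 + σ ^ 2)) σ (aux_e2nonneg _)
    (by linarith) hσ (by
      intro t ht
      have h1 := H' (fun i => - t * (h i + ν - lam i))
      have h2 : e2norm (fun i => - t * (h i + ν - lam i)) ^ 2
          = (t * e2norm (fun i => h i + ν - lam i)) ^ 2 := by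
        rw [mul_pow, aux_e2sq, aux_e2sq, Finset.mul_sum]
        exact Finset.sum_congr rfl fun i _ => by ring
      have h3 : ∑ i, (h i + ν - lam i) * (- t * (h i + ν - lam i))
          = - (t * e2norm (fun i => h i + ν - lam i) ^ 2) := by
        rw [aux_e2sq, Finset.mul_sum, ← Finset.sum_neg_distrib]
        exact Finset.sum_congr rfl fun i _ => by ring
      rw [h2, h3] at h1
      linarith)
  exact ⟨ν, lam, γ, hμ _, fun i => hμ _, hγ, h9.1, by linarith [h9.2]⟩

theorem lasso_stmt9 (m n k : ℕ) (hn : 1 ≤ n) (hk1 : 1 ≤ k) (hkn : k ≤ n)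
    (xt : Fin n → ℝ) (hxt : kSparseNonneg n k xt) (hxtpos : ∃ j, 0 < xt j)
    (σ Cw : ℝ) (hσ : 0 < σ) (hCw : 0 < Cw)
    (g : Fin m → ℝ) (h : Fin n → ℝ) :
    sInf ((fun w : Fin n → ℝ =>
        Real.sqrt (e2norm w ^ 2 + σ ^ 2) * e2norm g + ∑ i, h i * w i) ''
      {w : Fin n → ℝ | e2norm w ≤ Cw ∧ (∑ i, w i) ≤ 0 ∧ ∀ i, 0 ≤ xt i + w i})
    = sSup {z : ℝ | ∃ ν : ℝ, ∃ lam : Fin n → ℝ, ∃ γ : ℝ,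
        0 ≤ ν ∧ (∀ i, 0 ≤ lam i) ∧ 0 ≤ γ ∧
        e2norm (fun i => h i + ν - lam i) ≤ e2norm g + γ ∧
        z = σ * Real.sqrt ((e2norm g + γ) ^ 2
              - e2norm (fun i => h i + ν - lam i) ^ 2)
            - tailSum k lam xt - γ * Real.sqrt (Cw ^ 2 + σ ^ 2)} := by
  simp only [aux_tail _ xt hxt]
  have hzero : (0 : Fin n → ℝ) ∈
      {w : Fin n → ℝ | e2norm w ≤ Cw ∧ (∑ i, w i) ≤ 0 ∧ ∀ i, 0 ≤ xt i + w i} := by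
    refine ⟨?_, by simp, fun i => by simpa using hxt.2 i⟩
    simpa [e2norm] using hCw.le
  have hd : e2norm (fun i => h i + 0 - (0 : Fin n → ℝ) i) ≤ e2norm g + e2norm h := by
    simpa using aux_e2nonneg g
  apply le_antisymm
  · have hbdd : BddBelow ((fun w : Fin n → ℝ =>
        Real.sqrt (e2norm w ^ 2 + σ ^ 2) * e2norm g + ∑ i, h i * w i) ''
      {w : Fin n → ℝ | e2norm w ≤ Cw ∧ (∑ i, w i) ≤ 0 ∧ ∀ i, 0 ≤ xt i + w i}) := by
      refine ⟨σ * Real.sqrt ((e2norm g + e2norm h) ^ 2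
          - e2norm (fun i => h i + 0 - (0 : Fin n → ℝ) i) ^ 2)
          - ∑ i, (0 : Fin n → ℝ) i * xt i - e2norm h * Real.sqrt (Cw ^ 2 + σ ^ 2), ?_⟩
      rintro _ ⟨w, ⟨h1, h2, h3⟩, rfl⟩
      exact aux_weak xt σ Cw (e2norm g) h w h1 h2 h3 0 0 (e2norm h) le_rfl (fun i => le_rfl)
        (aux_e2nonneg h) hd
    obtain ⟨ν, lam, γ, h1, h2, h3, h4, h5⟩ := aux_strong xt hxt.2 hxtpos σ Cw (e2norm g) hσ hCw
      (aux_e2nonneg g) h _ (fun w h1 h2 h3 => csInf_le hbdd ⟨w, ⟨h1, h2, h3⟩, rfl⟩)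
    refine le_csSup_of_le ?_ ⟨ν, lam, γ, h1, h2, h3, h4, rfl⟩ h5
    refine ⟨Real.sqrt (e2norm (0 : Fin n → ℝ) ^ 2 + σ ^ 2) * e2norm g
      + ∑ i, h i * (0 : Fin n → ℝ) i, ?_⟩
    rintro _ ⟨ν, lam, γ, h1, h2, h3, h4, rfl⟩
    exact aux_weak xt σ Cw (e2norm g) h 0 hzero.1 hzero.2.1 hzero.2.2 ν lam γ h1 h2 h3 h4
  · apply csSup_le
    · exact ⟨_, 0, 0, e2norm h, le_rfl, fun i => le_rfl, aux_e2nonneg h, hd, rfl⟩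
    · rintro _ ⟨ν, lam, γ, h1, h2, h3, h4, rfl⟩
      apply le_csInf (Set.Nonempty.image _ ⟨0, hzero⟩)
      rintro _ ⟨w, ⟨h5, h6, h7⟩, rfl⟩
      exact aux_weak xt σ Cw (e2norm g) h w h5 h6 h7 ν lam γ h1 h2 h3 h4
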